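/- There exist a free group 𝔽' and an injective endomorphism Φ : 𝔽' → 𝔽' such that the mapping torus M(Φ) is isomorphic to the mapping torus M(Ψ). -/

import Mathlib

/-- Given `J ⊆ I`, the free factor `F = ⟨e_j : j ∈ J⟩` of the free group `G` on `I`. -/
def freeFactor {I : Type} (J : Set I) : Subgroup (FreeGroup I) :=
  Subgroup.closure (FreeGroup.of '' J)

/-- The relators `t e_j t⁻¹ Ψ(e_j)⁻¹ (j ∈ J)` of the mapping torus `M(Ψ)` of an injective
homomorphism `Ψ : F → G` from the free factor `F = ⟨e_j : j ∈ J⟩` of the free group `G` on `I`;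
the generator `none` plays the role of the stable letter `t`. -/
def mtRelsRel {I : Type} (J : Set I) (Ψ : freeFactor J →* FreeGroup I) :
    Set (FreeGroup (Option I)) :=
  Set.range fun j : J =>
    FreeGroup.of (none : Option I) * FreeGroup.of (some (j : I)) *
      (FreeGroup.of (none : Option I))⁻¹ *
      (FreeGroup.map some
        (Ψ ⟨FreeGroup.of (j : I),
          Subgroup.subset_closure (Set.mem_image_of_mem _ j.2)⟩))⁻¹

/-- The mapping torus `M(Ψ) = ⟨t, eᵢ (i ∈ I) | t e_j t⁻¹ Ψ(e_j)⁻¹ (j ∈ J)⟩`, i.e. the HNN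
extension `G ∗_F` with bonding maps the inclusion of `F` into `G` and `Ψ`. -/
abbrev MTRel {I : Type} (J : Set I) (Ψ : freeFactor J →* FreeGroup I) : Type :=
  PresentedGroup (mtRelsRel J Ψ)

/-- The relators `t e t⁻¹ Φ(e)⁻¹` of the mapping torus of an endomorphism `Φ` of the
free group on a basis `I'`; the generator `none` plays the role of the stable letter `t`. -/
def mtRels {I' : Type} (Φ : FreeGroup I' →* FreeGroup I') : Set (FreeGroup (Option I')) :=
  Set.range fun i : I' =>
    FreeGroup.of (none : Option I') * FreeGroup.of (some i) *
      (FreeGroup.of (none : Option I'))⁻¹ *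
      (FreeGroup.map some (Φ (FreeGroup.of i)))⁻¹

/-- The mapping torus `M(Φ) = ⟨t, e | t e t⁻¹ Φ(e)⁻¹⟩` of an endomorphism `Φ`. -/
abbrev MT {I' : Type} (Φ : FreeGroup I' →* FreeGroup I') : Type := PresentedGroup (mtRels Φ)

/-!
Let `Φ` act on the free group with basis `e_j` (`j ∈ J`) and `e_{k,n}` (`k ∉ J`, `n ∈ ℕ`) by
`e_j ↦ Ψ(e_j)`, where `e_k` is read as `e_{k,0}`, and `e_{k,n} ↦ e_{k,n+1}`. In `M(Φ)` the relators
of the second kind say that `e_{k,n} = tⁿ e_k t⁻ⁿ`; eliminating the `e_{k,n}` with `n > 0` leaves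
the presentation of `M(Ψ)`.

Splitting the target basis into the copy of `I` and the `e_{k,n+1}` exhibits `Φ` as the free product
of `Ψ` with an isomorphism of free groups. To see that this is injective without normal forms, write
`G ∗ FreeGroup Y` as `FreeGroup (G × Y) ⋊ G`, with `(g, y)` standing for `g y g⁻¹`: an injection
`G → H` then induces an injection on both factors of the semidirect product.
-/

section FreeProducts

open Monoid
open scoped Monoid.Coprod

variable {G H X Y : Type*} [Group G] [Group H]

variable (G Y) in
/-- The action of `G` on the free group on `G × Y` by left translation of the first coordinate. -/
def translationAut : G →* MulAut (FreeGroup (G × Y)) where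
  toFun g := FreeGroup.freeGroupCongr ((Equiv.mulLeft g).prodCongr (Equiv.refl Y))
  map_one' := by ext; simp
  map_mul' g h := MulEquiv.toMonoidHom_injective (by ext ⟨x, y⟩; simp [mul_assoc])

theorem translationAut_of (g h : G) (y : Y) :
    translationAut G Y g (FreeGroup.of (h, y)) = FreeGroup.of (g * h, y) :=
  FreeGroup.map.of

variable (G Y) in
/-- The decomposition of the free product `G ∗ FreeGroup Y` as the semidirect product of the normal
closure of `Y`, which is free on the conjugates `g y g⁻¹`, and `G`. -/
def coprodFreeGroupEquivSemidirect :
    G ∗ FreeGroup Y ≃* FreeGroup (G × Y) ⋊[translationAut G Y] G :=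
  MonoidHom.toMulEquiv
    (Coprod.lift SemidirectProduct.inr
      (FreeGroup.lift fun y => SemidirectProduct.inl (FreeGroup.of (1, y))))
    (SemidirectProduct.lift
      (FreeGroup.lift fun p => Coprod.inl p.1 * Coprod.inr (FreeGroup.of p.2) *
        (Coprod.inl p.1)⁻¹)
      Coprod.inl
      fun g => by ext ⟨h, y⟩; simp [translationAut_of, mul_assoc])
    (by ext <;> simp)
    (SemidirectProduct.hom_ext
      (by ext1 ⟨g, y⟩; simp [← map_inv, ← SemidirectProduct.inl_aut, translationAut_of])
      (by ext1; simp))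

theorem semidirectProduct_map_injective {N₁ N₂ : Type*} [Group N₁] [Group N₂]
    {φ₁ : G →* MulAut N₁} {φ₂ : H →* MulAut N₂} {fn : N₁ →* N₂} {fg : G →* H}
    (h : ∀ g, fn.comp (φ₁ g).toMonoidHom = (φ₂ (fg g)).toMonoidHom.comp fn)
    (hfn : Function.Injective fn) (hfg : Function.Injective fg) :
    Function.Injective (SemidirectProduct.map fn fg h) := fun _ _ hab =>
  SemidirectProduct.ext (hfn (congrArg SemidirectProduct.left hab))
    (hfg (congrArg SemidirectProduct.right hab))

theorem freeGroup_map_comp_translationAut (ψ : G →* H) (g : G) :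
    (FreeGroup.map (Prod.map ψ (id : Y → Y))).comp (translationAut G Y g).toMonoidHom =
      (translationAut H Y (ψ g)).toMonoidHom.comp (FreeGroup.map (Prod.map ψ id)) := by
  ext ⟨h, y⟩
  simp [translationAut_of]

theorem coprodFreeGroupEquivSemidirect_comp_map (ψ : G →* H) :
    (coprodFreeGroupEquivSemidirect H Y).toMonoidHom.comp
        (Coprod.map ψ (MonoidHom.id (FreeGroup Y))) =
      (SemidirectProduct.map (FreeGroup.map (Prod.map ψ id)) ψ
        (freeGroup_map_comp_translationAut ψ)).comp
          (coprodFreeGroupEquivSemidirect G Y).toMonoidHom := by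
  ext <;> simp [coprodFreeGroupEquivSemidirect]

theorem coprod_map_id_freeGroup_injective {ψ : G →* H} (hψ : Function.Injective ψ) :
    Function.Injective (Coprod.map ψ (MonoidHom.id (FreeGroup Y))) := by
  have comp_injective : Function.Injective ((coprodFreeGroupEquivSemidirect H Y).toMonoidHom.comp
      (Coprod.map ψ (MonoidHom.id (FreeGroup Y)))) := by
    rw [coprodFreeGroupEquivSemidirect_comp_map]
    exact (semidirectProduct_map_injective (freeGroup_map_comp_translationAut ψ)
      (FreeGroup.map_injective (hψ.prodMap Function.injective_id)) hψ).comp (MulEquiv.injective _)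
  exact Function.Injective.of_comp comp_injective

variable (X Y) in
/-- The free group on a disjoint union as a free product of free groups. -/
def freeGroupSumEquivCoprod : FreeGroup (X ⊕ Y) ≃* FreeGroup X ∗ FreeGroup Y :=
  MonoidHom.toMulEquiv
    (FreeGroup.lift
      (Sum.elim (fun x => Coprod.inl (FreeGroup.of x)) (fun y => Coprod.inr (FreeGroup.of y))))
    (Coprod.lift (FreeGroup.map Sum.inl) (FreeGroup.map Sum.inr))
    (by ext (x | y) <;> simp)
    (by ext <;> simp)

end FreeProducts

section FreeFactor

variable {I : Type} (J : Set I)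

/-- The canonical homomorphism from the free group on `J` to the free factor generated by `J`. -/
def freeFactor.ofFreeGroup : FreeGroup J →* freeFactor J :=
  FreeGroup.lift fun j =>
    ⟨FreeGroup.of (j : I), Subgroup.subset_closure (Set.mem_image_of_mem _ j.2)⟩

theorem freeFactor.ofFreeGroup_injective : Function.Injective (freeFactor.ofFreeGroup J) := by
  have subtype_comp : (freeFactor J).subtype.comp (freeFactor.ofFreeGroup J) =
      FreeGroup.map Subtype.val := by
    ext
    simp [freeFactor.ofFreeGroup]
  refine Function.Injective.of_comp (f := (freeFactor J).subtype) ?_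
  rw [← MonoidHom.coe_comp, subtype_comp]
  exact FreeGroup.map_injective Subtype.val_injective

end FreeFactor

section StableLetter

variable {X Y G : Type*} [Group G]

theorem freeGroup_lift_map (f : Y → G) (g : X → Y) (w : FreeGroup X) :
    FreeGroup.lift f (FreeGroup.map g w) = FreeGroup.lift (f ∘ g) w := by
  rw [← MonoidHom.comp_apply]
  congr 1
  ext
  simp

/-- The relator `t x t⁻¹ w⁻¹`, with `none` as the stable letter `t`; both `mtRels` and `mtRelsRel`
consist of relators of this form. -/
def stableRelator (x : X) (w : FreeGroup X) : FreeGroup (Option X) :=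
  FreeGroup.of none * FreeGroup.of (some x) * (FreeGroup.of none)⁻¹ * (FreeGroup.map some w)⁻¹

theorem lift_stableRelator_eq_one_iff (f : Option X → G) (x : X) (w : FreeGroup X) :
    FreeGroup.lift f (stableRelator x w) = 1 ↔
      SemiconjBy (f none) (f (some x)) (FreeGroup.lift (f ∘ some) w) := by
  simp only [stableRelator, map_mul, map_inv, FreeGroup.lift_apply_of, freeGroup_lift_map,
    mul_inv_eq_iff_eq_mul, one_mul, SemiconjBy]

theorem semiconjBy_of_stableRelator_mem {rels : Set (FreeGroup (Option X))} {x : X}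
    {w : FreeGroup X} (h : stableRelator x w ∈ rels) :
    SemiconjBy (PresentedGroup.of none : PresentedGroup rels) (PresentedGroup.of (some x))
      (FreeGroup.lift (PresentedGroup.of ∘ some) w) := by
  have mk_eq_lift : PresentedGroup.mk rels = FreeGroup.lift PresentedGroup.of := by
    ext
    simp [PresentedGroup.of]
  rw [← lift_stableRelator_eq_one_iff, ← mk_eq_lift]
  exact PresentedGroup.one_of_mem h

theorem mtRels_eq_range_stableRelator {I' : Type} (Φ : FreeGroup I' →* FreeGroup I') :
    mtRels Φ = Set.range fun i => stableRelator i (Φ (FreeGroup.of i)) :=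
  rfl

theorem MT.semiconjBy {I' : Type} (Φ : FreeGroup I' →* FreeGroup I') (i : I') :
    SemiconjBy (PresentedGroup.of none : MT Φ) (PresentedGroup.of (some i))
      (FreeGroup.lift (PresentedGroup.of ∘ some) (Φ (FreeGroup.of i))) :=
  semiconjBy_of_stableRelator_mem
    (mtRels_eq_range_stableRelator Φ ▸ Set.mem_range_self i)

variable {I : Type} (J : Set I) (Ψ : freeFactor J →* FreeGroup I)

theorem mtRelsRel_eq_range_stableRelator :
    mtRelsRel J Ψ = Set.range fun j : J =>
      stableRelator (j : I) (Ψ (freeFactor.ofFreeGroup J (FreeGroup.of j))) := by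
  simp [mtRelsRel, stableRelator, freeFactor.ofFreeGroup]

theorem MTRel.semiconjBy (j : J) :
    SemiconjBy (PresentedGroup.of none : MTRel J Ψ) (PresentedGroup.of (some (j : I)))
      (FreeGroup.lift (PresentedGroup.of ∘ some)
        (Ψ (freeFactor.ofFreeGroup J (FreeGroup.of j)))) :=
  semiconjBy_of_stableRelator_mem
    (mtRelsRel_eq_range_stableRelator J Ψ ▸ Set.mem_range_self j)

end StableLetter

section Telescope

variable {I : Type} (J : Set I)

/-- The basis of the free group `𝔽'`: `Sum.inl j` is `e_j`, and `Sum.inr (k, n)` stands for the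
conjugate `tⁿ e_k t⁻ⁿ` in the mapping torus. -/
abbrev TelescopeIndex : Type := J ⊕ (↥Jᶜ × ℕ)

open Classical in
/-- The inclusion of `I` into the basis of `𝔽'`, identifying `k ∉ J` with `(k, 0)`. -/
noncomputable def telescopeIncl (i : I) : TelescopeIndex J :=
  Sum.map id (fun k => (k, 0)) ((Equiv.Set.sumCompl J).symm i)

theorem telescopeIncl_coe (j : J) : telescopeIncl J j = Sum.inl j := by
  simp [telescopeIncl]

theorem telescopeIncl_coe_compl (k : ↥Jᶜ) : telescopeIncl J k = Sum.inr (k, 0) := by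
  simp [telescopeIncl]

/-- The splitting of the basis of `𝔽'` into the copy of `I` and the elements `(k, n + 1)`. -/
noncomputable def telescopeShift : I ⊕ (↥Jᶜ × ℕ) → TelescopeIndex J :=
  Sum.elim (telescopeIncl J) fun y => Sum.inr (y.1, y.2 + 1)

theorem telescopeShift_injective : Function.Injective (telescopeShift J) := by
  classical
  refine Function.Injective.sumElim ?_ ?_ ?_
  · exact (Function.injective_id.sumMap (Prod.mk_left_injective 0)).comp (Equiv.injective _)
  · rintro ⟨k, n⟩ ⟨k', n'⟩ h
    simpa using h
  · intro i y
    rcases (Equiv.Set.sumCompl J).surjective i with ⟨j | k, rfl⟩ <;>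
      simp [telescopeIncl_coe, telescopeIncl_coe_compl]

variable (Ψ : freeFactor J →* FreeGroup I)

/-- The endomorphism `Φ` of `𝔽'` that is `Ψ` on the free factor on `J` and shifts `(k, n)` to
`(k, n + 1)`. -/
noncomputable def telescopeEndo : FreeGroup (TelescopeIndex J) →* FreeGroup (TelescopeIndex J) :=
  FreeGroup.lift (Sum.elim
    (fun j => FreeGroup.map (telescopeIncl J) (Ψ (freeFactor.ofFreeGroup J (FreeGroup.of j))))
    (fun y => FreeGroup.of (Sum.inr (y.1, y.2 + 1))))

theorem telescopeEndo_of_inl (j : J) :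
    telescopeEndo J Ψ (FreeGroup.of (Sum.inl j)) =
      FreeGroup.map (telescopeIncl J) (Ψ (freeFactor.ofFreeGroup J (FreeGroup.of j))) := by
  simp [telescopeEndo]

theorem telescopeEndo_of_inr (k : ↥Jᶜ) (n : ℕ) :
    telescopeEndo J Ψ (FreeGroup.of (Sum.inr (k, n))) = FreeGroup.of (Sum.inr (k, n + 1)) := by
  simp [telescopeEndo]

theorem telescopeEndo_eq_map_coprod_map (x : FreeGroup (TelescopeIndex J)) :
    telescopeEndo J Ψ x = FreeGroup.map (telescopeShift J)
      ((freeGroupSumEquivCoprod I (↥Jᶜ × ℕ)).symm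
        (Monoid.Coprod.map (Ψ.comp (freeFactor.ofFreeGroup J)) (MonoidHom.id _)
          (freeGroupSumEquivCoprod J (↥Jᶜ × ℕ) x))) := by
  suffices telescopeEndo J Ψ = ((FreeGroup.map (telescopeShift J)).comp
      (freeGroupSumEquivCoprod I (↥Jᶜ × ℕ)).symm.toMonoidHom).comp
        ((Monoid.Coprod.map (Ψ.comp (freeFactor.ofFreeGroup J)) (MonoidHom.id _)).comp
          (freeGroupSumEquivCoprod J (↥Jᶜ × ℕ)).toMonoidHom) from DFunLike.congr_fun this x
  ext (j | ⟨k, n⟩)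
  · simp [telescopeEndo_of_inl, freeGroupSumEquivCoprod, FreeGroup.map.comp, telescopeShift,
      Function.comp_def]
  · simp [telescopeEndo_of_inr, freeGroupSumEquivCoprod, telescopeShift]

theorem telescopeEndo_injective {Ψ : freeFactor J →* FreeGroup I} (hΨ : Function.Injective Ψ) :
    Function.Injective (telescopeEndo J Ψ) := by
  have hψ : Function.Injective (Ψ.comp (freeFactor.ofFreeGroup J)) :=
    hΨ.comp (freeFactor.ofFreeGroup_injective J)
  rw [funext (telescopeEndo_eq_map_coprod_map J Ψ)]
  exact (FreeGroup.map_injective (telescopeShift_injective J)).comp <|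
    (MulEquiv.injective _).comp <|
      (coprod_map_id_freeGroup_injective hψ).comp (MulEquiv.injective _)

/-- The images in `M(Ψ)` of the generators of `M(Φ)`. -/
def toMTRelGen : Option (TelescopeIndex J) → MTRel J Ψ
  | none => PresentedGroup.of none
  | some (Sum.inl j) => PresentedGroup.of (some (j : I))
  | some (Sum.inr (k, n)) =>
      PresentedGroup.of none ^ n * PresentedGroup.of (some (k : I)) * (PresentedGroup.of none ^ n)⁻¹

theorem toMTRelGen_telescopeIncl (i : I) :
    toMTRelGen J Ψ (some (telescopeIncl J i)) = PresentedGroup.of (some i) := by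
  classical
  rcases (Equiv.Set.sumCompl J).surjective i with ⟨j | k, rfl⟩ <;>
    simp [telescopeIncl_coe, telescopeIncl_coe_compl, toMTRelGen]

theorem lift_toMTRelGen_eq_one :
    ∀ r ∈ mtRels (telescopeEndo J Ψ), FreeGroup.lift (toMTRelGen J Ψ) r = 1 := by
  rw [mtRels_eq_range_stableRelator, Set.forall_mem_range]
  intro i
  rw [lift_stableRelator_eq_one_iff]
  rcases i with j | ⟨k, n⟩
  · have comp_telescopeIncl : (toMTRelGen J Ψ ∘ some) ∘ telescopeIncl J =
        PresentedGroup.of ∘ some := funext (toMTRelGen_telescopeIncl J Ψ)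
    rw [telescopeEndo_of_inl, freeGroup_lift_map, comp_telescopeIncl]
    exact MTRel.semiconjBy J Ψ j
  · have conj_toMTRelGen : toMTRelGen J Ψ (some (Sum.inr (k, n + 1))) =
        toMTRelGen J Ψ none * toMTRelGen J Ψ (some (Sum.inr (k, n))) *
          (toMTRelGen J Ψ none)⁻¹ := by
      simp only [toMTRelGen, pow_succ', mul_inv_rev, mul_assoc]
    rw [telescopeEndo_of_inr, FreeGroup.lift_apply_of, Function.comp_apply, conj_toMTRelGen]
    exact SemiconjBy.conj_mk _ _

/-- The images in `M(Φ)` of the generators of `M(Ψ)`. -/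
noncomputable def ofMTRelGen : Option I → MT (telescopeEndo J Ψ) :=
  PresentedGroup.of ∘ Option.map (telescopeIncl J)

theorem lift_ofMTRelGen_eq_one :
    ∀ r ∈ mtRelsRel J Ψ, FreeGroup.lift (ofMTRelGen J Ψ) r = 1 := by
  rw [mtRelsRel_eq_range_stableRelator, Set.forall_mem_range]
  intro j
  rw [lift_stableRelator_eq_one_iff]
  have rel := MT.semiconjBy (telescopeEndo J Ψ) (Sum.inl j)
  rw [telescopeEndo_of_inl, freeGroup_lift_map, ← telescopeIncl_coe] at rel
  exact rel

theorem MT.semiconjBy_pow (k : ↥Jᶜ) (n : ℕ) :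
    SemiconjBy (PresentedGroup.of none ^ n : MT (telescopeEndo J Ψ))
      (PresentedGroup.of (some (Sum.inr (k, 0)))) (PresentedGroup.of (some (Sum.inr (k, n)))) := by
  induction n with
  | zero => simp
  | succ n ih =>
    have rel := MT.semiconjBy (telescopeEndo J Ψ) (Sum.inr (k, n))
    rw [telescopeEndo_of_inr, FreeGroup.lift_apply_of] at rel
    rw [pow_succ']
    exact rel.mul_left ih

/-- The isomorphism `M(Φ) ≅ M(Ψ)` for `Φ = telescopeEndo J Ψ`. -/
noncomputable def mtTelescopeEndoEquiv : MT (telescopeEndo J Ψ) ≃* MTRel J Ψ :=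
  MonoidHom.toMulEquiv
    (PresentedGroup.toGroup (lift_toMTRelGen_eq_one J Ψ))
    (PresentedGroup.toGroup (lift_ofMTRelGen_eq_one J Ψ))
    (by
      ext (_ | j | ⟨k, n⟩)
      · simp [toMTRelGen, ofMTRelGen]
      · simp [toMTRelGen, ofMTRelGen, telescopeIncl_coe]
      · simpa [toMTRelGen, ofMTRelGen, telescopeIncl_coe_compl, mul_inv_eq_iff_eq_mul] using
          (MT.semiconjBy_pow J Ψ k n).eq)
    (by
      ext (_ | i)
      · simp [toMTRelGen, ofMTRelGen]
      · simp [ofMTRelGen, toMTRelGen_telescopeIncl])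

end Telescope

/-- There exist a free group `𝔽'` and an injective endomorphism `Φ : 𝔽' → 𝔽'` such that the
mapping torus `M(Φ)` is isomorphic to the mapping torus `M(Ψ)`. -/
theorem mappingTorusRel_iso_mappingTorus {I : Type} (J : Set I)
    (Ψ : freeFactor J →* FreeGroup I) (hΨ : Function.Injective Ψ) :
    ∃ (I' : Type) (Φ : FreeGroup I' →* FreeGroup I'),
      Function.Injective Φ ∧ Nonempty (MT Φ ≃* MTRel J Ψ) :=
  ⟨TelescopeIndex J, telescopeEndo J Ψ, telescopeEndo_injective J hΨ,
    ⟨mtTelescopeEndoEquiv J Ψ⟩⟩
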